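/- Let G be a group. (1) For every bounded function b : G → ℝ and all g, h ∈ G, ⟨db, m₂(g,h)⟩ = 0, where db(u,v) := b(v) − b(uv) + b(u). (2) For every bounded 2-cocycle c on G with homogeneous representative c_x (the unique homogeneous bounded 2-cocycle with c − c_x the coboundary of a bounded function), one has ⟨c, m₂(g,h)⟩ = c_x(g,h) for all g, h ∈ G; explicitly, c_x(g,h) = c(g,h) − μ_c(g) + μ_c(gh) − μ_c(h), where μ_c(g) := Σ_{n≥1} 2⁻ⁿ·c(g^{2^{n−1}}, g^{2^{n−1}}). -/

import Mathlib

noncomputable section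

open scoped ENNReal

instance : Fact ((1 : ℝ≥0∞) ≤ 1) := ⟨le_rfl⟩

/-- Dirac element of `ℓ¹(G×G)`. -/
def dirac {G : Type*} [Group G] (x : G × G) : lp (fun _ : G × G => ℝ) 1 :=
  letI := Classical.decEq (G × G)
  lp.single 1 x 1

/-- `m(g) = Σ_{n≥1} 2⁻ⁿ · δ_{(g^{2^{n-1}}, g^{2^{n-1}})} ∈ ℓ¹(G×G)`. -/
def mm {G : Type*} [Group G] (g : G) : lp (fun _ : G × G => ℝ) 1 :=
  ∑' n : ℕ, ((1 : ℝ) / 2) ^ (n + 1) • dirac (g ^ 2 ^ n, g ^ 2 ^ n)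

/-- `m₂(g,h) = δ_{(g,h)} − m(g) + m(gh) − m(h) ∈ ℓ¹(G×G)`. -/
def m2 {G : Type*} [Group G] (g h : G) : lp (fun _ : G × G => ℝ) 1 :=
  dirac (g, h) - mm g + mm (g * h) - mm h

/-- A bounded real 2-cocycle on a group `G` (normalized: vanishing when one argument is 1). -/
def IsBounded2Cocycle {G : Type*} [Group G] (c : G → G → ℝ) : Prop :=
  (∃ k : ℝ, ∀ g h : G, |c g h| ≤ k) ∧
  (∀ g h k : G, c h k - c (g * h) k + c g (h * k) - c g h = 0) ∧
  (∀ g : G, c g 1 = 0) ∧ (∀ g : G, c 1 g = 0)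

/-- A homogeneous 2-cocycle: it vanishes on pairs of powers of a single element. -/
def IsHomogeneous2Cocycle {G : Type*} [Group G] (c : G → G → ℝ) : Prop :=
  ∀ (g : G) (n m : ℕ), c (g ^ n) (g ^ m) = 0

theorem summable_norm_of_lp_one {X : Type*} (z : lp (fun _ : X => ℝ) 1) :
    Summable fun x => ‖z x‖ := by
  simpa using (lp.memℓp z).summable (by norm_num)

theorem norm_mul_le_of_bounded {X : Type*} (f : X → ℝ) (k : ℝ) (hk : ∀ x, |f x| ≤ k)
    (z : lp (fun _ : X => ℝ) 1) (x : X) : ‖z x * f x‖ ≤ ‖z x‖ * k := by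
  rw [norm_mul]
  exact mul_le_mul_of_nonneg_left (hk x) (norm_nonneg _)

theorem summable_mul_of_bounded {X : Type*} (f : X → ℝ) (k : ℝ) (hk : ∀ x, |f x| ≤ k)
    (z : lp (fun _ : X => ℝ) 1) : Summable fun x => z x * f x :=
  Summable.of_norm_bounded ((summable_norm_of_lp_one z).mul_right k)
    (norm_mul_le_of_bounded f k hk z)

/-- The pairing of `ℓ¹(X)` with a bounded function, as a continuous linear functional. -/
def boundedPairing {X : Type*} (f : X → ℝ) (k : ℝ) (hk : ∀ x, |f x| ≤ k) :
    lp (fun _ : X => ℝ) 1 →L[ℝ] ℝ :=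
  LinearMap.mkContinuous
    { toFun := fun z => ∑' x, z x * f x
      map_add' := fun y z => by
        rw [← (summable_mul_of_bounded f k hk y).tsum_add
          (summable_mul_of_bounded f k hk z)]
        exact tsum_congr fun x => by simp [add_mul]
      map_smul' := fun a z => by
        simp [mul_assoc, tsum_mul_left] }
    k fun z => by
      have hz : ‖z‖ = ∑' x, ‖z x‖ := by
        simpa using lp.norm_eq_tsum_rpow (p := 1) (by norm_num) z
      rw [hz, mul_comm, ← tsum_mul_right]
      exact tsum_of_norm_bounded ((summable_norm_of_lp_one z).mul_right k).hasSum
        (norm_mul_le_of_bounded f k hk z)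

theorem boundedPairing_apply {X : Type*} (f : X → ℝ) (k : ℝ) (hk : ∀ x, |f x| ≤ k)
    (z : lp (fun _ : X => ℝ) 1) : boundedPairing f k hk z = ∑' x, z x * f x := rfl

theorem boundedPairing_dirac {G : Type*} [Group G] (f : G × G → ℝ) (k : ℝ)
    (hk : ∀ x, |f x| ≤ k) (x : G × G) : boundedPairing f k hk (dirac x) = f x := by
  classical
  rw [boundedPairing_apply, tsum_eq_single x]
  · simp [dirac]
  · intro y hy
    simp [dirac, hy]

theorem norm_dirac {G : Type*} [Group G] (x : G × G) : ‖dirac x‖ = 1 := by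
  simp [dirac, lp.norm_single]

theorem boundedPairing_mm {G : Type*} [Group G] (f : G × G → ℝ) (k : ℝ)
    (hk : ∀ x, |f x| ≤ k) (g : G) :
    boundedPairing f k hk (mm g) =
      ∑' n : ℕ, ((1 : ℝ) / 2) ^ (n + 1) * f (g ^ 2 ^ n, g ^ 2 ^ n) := by
  have hs : Summable fun n : ℕ => ((1 : ℝ) / 2) ^ (n + 1) • dirac (g ^ 2 ^ n, g ^ 2 ^ n) := by
    refine Summable.of_norm_bounded (g := fun n : ℕ => ((1 : ℝ) / 2) ^ (n + 1))
      ((summable_nat_add_iff 1).2 summable_geometric_two) fun n => ?_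
    simp [norm_smul, norm_dirac]
  rw [mm, ContinuousLinearMap.map_tsum _ hs]
  exact tsum_congr fun n => by
    rw [map_smul, boundedPairing_dirac, smul_eq_mul]

theorem tsum_m2_mul {G : Type*} [Group G] (f : G × G → ℝ) (k : ℝ)
    (hk : ∀ x, |f x| ≤ k) (g h : G) :
    ∑' x, m2 g h x * f x = f (g, h)
      - (∑' n : ℕ, ((1 : ℝ) / 2) ^ (n + 1) * f (g ^ 2 ^ n, g ^ 2 ^ n))
      + (∑' n : ℕ, ((1 : ℝ) / 2) ^ (n + 1) * f ((g * h) ^ 2 ^ n, (g * h) ^ 2 ^ n))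
      - (∑' n : ℕ, ((1 : ℝ) / 2) ^ (n + 1) * f (h ^ 2 ^ n, h ^ 2 ^ n)) := by
  rw [← boundedPairing_apply f k hk, m2, map_sub, map_add, map_sub, boundedPairing_dirac]
  simp only [boundedPairing_mm]

/-- The dyadic average of the coboundary of a bounded function `b` along the powers of `g`
telescopes to `b g`. -/
theorem tsum_dyadic_coboundary {G : Type*} [Group G] (b : G → ℝ) (k : ℝ)
    (hk : ∀ x, |b x| ≤ k) (g : G) :
    ∑' n : ℕ, ((1 : ℝ) / 2) ^ (n + 1) *
      (b (g ^ 2 ^ n) - b (g ^ 2 ^ n * g ^ 2 ^ n) + b (g ^ 2 ^ n)) = b g := by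
  have hs : Summable fun n : ℕ => ((1 : ℝ) / 2) ^ n * b (g ^ 2 ^ n) := by
    refine Summable.of_norm_bounded (summable_geometric_two.mul_right k) fun n => ?_
    rw [norm_mul, Real.norm_of_nonneg (by positivity)]
    exact mul_le_mul_of_nonneg_left (hk _) (by positivity)
  have hterm (n : ℕ) : ((1 : ℝ) / 2) ^ (n + 1) *
      (b (g ^ 2 ^ n) - b (g ^ 2 ^ n * g ^ 2 ^ n) + b (g ^ 2 ^ n)) =
      ((1 : ℝ) / 2) ^ n * b (g ^ 2 ^ n) - ((1 : ℝ) / 2) ^ (n + 1) * b (g ^ 2 ^ (n + 1)) := by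
    rw [← pow_add, ← two_mul (2 ^ n), ← pow_succ' 2 n]
    ring
  rw [tsum_congr hterm, hs.tsum_sub ((summable_nat_add_iff 1).2 hs), hs.tsum_eq_zero_add]
  simp

theorem tsum_m2_mul_coboundary {G : Type*} [Group G] (b : G → ℝ) (k : ℝ)
    (hk : ∀ x, |b x| ≤ k) (g h : G) :
    ∑' uv : G × G, m2 g h uv * (b uv.2 - b (uv.1 * uv.2) + b uv.1) = 0 := by
  rw [tsum_m2_mul (fun uv : G × G => b uv.2 - b (uv.1 * uv.2) + b uv.1) (3 * k)]
  · simp only [tsum_dyadic_coboundary b k hk]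
    ring
  · intro uv
    have h1 := abs_le.1 (hk uv.1)
    have h2 := abs_le.1 (hk uv.2)
    have h3 := abs_le.1 (hk (uv.1 * uv.2))
    exact abs_le.2 ⟨by linarith, by linarith⟩

/-- A homogeneous cocycle is its own pairing with `m₂`. -/
theorem tsum_m2_mul_homogeneous {G : Type*} [Group G] (c : G → G → ℝ) (k : ℝ)
    (hk : ∀ g h, |c g h| ≤ k) (hc : IsHomogeneous2Cocycle c) (g h : G) :
    ∑' uv : G × G, m2 g h uv * c uv.1 uv.2 = c g h := by
  have hc' (x : G) (n : ℕ) : c (x ^ 2 ^ n) (x ^ 2 ^ n) = 0 := hc x _ _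
  rw [tsum_m2_mul (fun uv : G × G => c uv.1 uv.2) k fun uv => hk _ _]
  simp [hc']

/-- (1) `⟨db, m₂(g,h)⟩ = 0` for every bounded `b`; (2) for a bounded 2-cocycle
`c` with homogeneous representative `c_x`, `⟨c, m₂(g,h)⟩ = c_x(g,h)`, explicitly given by
`c_x(g,h) = c(g,h) − μ_c(g) + μ_c(gh) − μ_c(h)`. -/
theorem stmt_9 {G : Type*} [Group G] :
    (∀ b : G → ℝ, (∃ k : ℝ, ∀ x : G, |b x| ≤ k) → ∀ g h : G,
      ∑' uv : G × G, m2 g h uv * (b uv.2 - b (uv.1 * uv.2) + b uv.1) = 0) ∧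
    (∀ c cx : G → G → ℝ,
      IsBounded2Cocycle c →
      IsBounded2Cocycle cx → IsHomogeneous2Cocycle cx →
      (∃ b : G → ℝ, (∃ k : ℝ, ∀ x : G, |b x| ≤ k) ∧
        ∀ g h : G, c g h - cx g h = b h - b (g * h) + b g) →
      ∀ g h : G,
        (∑' uv : G × G, m2 g h uv * c uv.1 uv.2 = cx g h) ∧
        cx g h = c g h
          - (∑' n : ℕ, ((1 : ℝ) / 2) ^ (n + 1) * c (g ^ 2 ^ n) (g ^ 2 ^ n))
          + (∑' n : ℕ, ((1 : ℝ) / 2) ^ (n + 1) * c ((g * h) ^ 2 ^ n) ((g * h) ^ 2 ^ n))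
          - (∑' n : ℕ, ((1 : ℝ) / 2) ^ (n + 1) * c (h ^ 2 ^ n) (h ^ 2 ^ n))) := by
  refine ⟨fun b ⟨k, hk⟩ g h => tsum_m2_mul_coboundary b k hk g h, ?_⟩
  rintro c cx ⟨⟨k, hk⟩, -⟩ ⟨⟨l, hl⟩, -⟩ hcx ⟨b, ⟨k', hk'⟩, hb⟩ g h
  have hpair : ∑' uv : G × G, m2 g h uv * c uv.1 uv.2 = cx g h := by
    have hdiff := tsum_m2_mul_coboundary b k' hk' g h
    simp only [← hb] at hdiff
    simp only [mul_sub] at hdiff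
    rw [(summable_mul_of_bounded _ k (fun uv : G × G => hk uv.1 uv.2) _).tsum_sub
      (summable_mul_of_bounded _ l (fun uv : G × G => hl uv.1 uv.2) _),
      tsum_m2_mul_homogeneous cx l hl hcx] at hdiff
    exact sub_eq_zero.1 hdiff
  refine ⟨hpair, ?_⟩
  rw [← hpair, tsum_m2_mul (fun uv : G × G => c uv.1 uv.2) k fun uv => hk _ _]
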